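/- arXiv:2506.02407 — 3 statements merged into one kernel-verified Lean document; each statement's English description precedes it below -/
import Mathlib

section
/- Let h, λ > 0 and w ∈ ℝ, and let S(y) = max(0, 1 − |y|/h)/h be the tent shape function of spacing h. Fix integers i, l, j with i < l and real numbers x_old, x_new, y satisfying i·h ≤ x_old < (i+1)·h, l·h ≤ x_new < (l+1)·h, and j·h ≤ y < (j+1)·h. Let n_bg : ℤ × ℤ → ℝ and n0 ∈ ℝ, and define the densities n_old(k,r) = n_bg(k,r) + w·S(x_old − k·h)·S(y − r·h) and n_new(k,r) = n_bg(k,r) + w·S(x_new − k·h)·S(y − r·h). Suppose (Ex, Ey) satisfies the discrete Gauss's law with density n_old, background n0, and parameter λ. Define an updated field Ex* by, for each s ∈ {j, j+1}: Ex*(i,s) = Ex(i,s) + (h·w/λ²)·S(x_old − i·h)·S(y − s·h); Ex*(r,s) = Ex(r,s) + (h·w/λ²)·[S(x_old − i·h) + S(x_old − (i+1)·h) − S(x_new − (i+1)·h)]·S(y − s·h) for every integer r with i+1 ≤ r ≤ l−1; Ex*(l,s) = Ex(l,s) + (h·w/λ²)·S(x_new − (l+1)·h)·S(y − s·h); and Ex*(k,r)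 = Ex(k,r) for all other index pairs (k,r). Then (Ex*, Ey) satisfies the discrete Gauss's law with density n_new, background n0, and parameter λ at every node of ℤ × ℤ. -/
/-- The tent (linear B-spline) shape function of spacing `h`. -/
noncomputable def tent (h : ℝ) (y : ℝ) : ℝ := max 0 (1 - |y| / h) / h

/-- Discrete divergence of a staggered electric field `(Ex, Ey)` on the
uniform grid of spacing `h`, at node `(k, r)`. -/
noncomputable def divh (h : ℝ) (Ex Ey : ℤ × ℤ → ℝ) (p : ℤ × ℤ) : ℝ :=
  (Ex p - Ex (p.1 - 1, p.2)) / h + (Ey p - Ey (p.1, p.2 - 1)) / h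

theorem tent_zero_aux (h x : ℝ) (hh : 0 < h) (a k : ℤ)
    (h1 : (a : ℝ) * h ≤ x) (h2 : x < ((a : ℝ) + 1) * h) (hk : k < a ∨ a + 1 < k) :
    tent h (x - k * h) = 0 := by
  have key : h ≤ |x - k * h| := by
    rcases hk with hk | hk
    · have : (k : ℝ) + 1 ≤ a := by exact_mod_cast hk
      have := mul_le_mul_of_nonneg_right this hh.le
      exact le_trans (by linarith) (le_abs_self _)
    · have : (a : ℝ) + 1 + 1 ≤ k := by exact_mod_cast hk
      have := mul_le_mul_of_nonneg_right this hh.le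
      exact le_trans (by linarith) (neg_le_abs _)
  have : 1 ≤ |x - k * h| / h := by rwa [le_div_iff₀ hh, one_mul]
  unfold tent
  rw [max_eq_left (by linarith), zero_div]

theorem tent_sum_aux (h x : ℝ) (hh : 0 < h) (a : ℤ)
    (h1 : (a : ℝ) * h ≤ x) (h2 : x < ((a : ℝ) + 1) * h) :
    tent h (x - a * h) + tent h (x - ((a + 1 : ℤ) : ℝ) * h) = 1 / h := by
  push_cast
  unfold tent
  rw [abs_of_nonneg (by linarith), abs_of_nonpos (by linarith)]
  have e1 : (x - a * h) / h ≤ 1 := by rw [div_le_one hh]; linarith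
  have e2 : -(x - (a + 1) * h) / h ≤ 1 := by rw [div_le_one hh]; linarith
  rw [max_eq_right (by linarith), max_eq_right (by linarith)]
  field_simp
  ring

/-- Cell-crossing case of Theorem 3.1: the local electric-field update
(3.6)–(3.11) accompanying a particle move in the `x`-direction across cell
boundaries (from cell `i` to cell `l`, `i < l`) exactly preserves the discrete
Gauss's law at every node. -/
theorem gauss_preserved_cell_crossing
    (h lam w : ℝ) (hh : 0 < h) (hlam : 0 < lam)
    (i l j : ℤ) (hil : i < l) (xold xnew y : ℝ)
    (hxold₁ : (i : ℝ) * h ≤ xold) (hxold₂ : xold < ((i : ℝ) + 1) * h)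
    (hxnew₁ : (l : ℝ) * h ≤ xnew) (hxnew₂ : xnew < ((l : ℝ) + 1) * h)
    (hy₁ : (j : ℝ) * h ≤ y) (hy₂ : y < ((j : ℝ) + 1) * h)
    (nbg : ℤ × ℤ → ℝ) (n0 : ℝ)
    (nold nnew : ℤ × ℤ → ℝ)
    (hnold : ∀ q : ℤ × ℤ,
      nold q = nbg q + w * tent h (xold - q.1 * h) * tent h (y - q.2 * h))
    (hnnew : ∀ q : ℤ × ℤ,
      nnew q = nbg q + w * tent h (xnew - q.1 * h) * tent h (y - q.2 * h))
    (Ex Ey : ℤ × ℤ → ℝ)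
    (hGauss : ∀ p : ℤ × ℤ, divh h Ex Ey p = (n0 - nold p) / lam ^ 2)
    (Exstar : ℤ × ℤ → ℝ)
    (hstar_i : ∀ s : ℤ, s = j ∨ s = j + 1 →
      Exstar (i, s) = Ex (i, s)
        + (h * w / lam ^ 2) * tent h (xold - i * h) * tent h (y - s * h))
    (hstar_mid : ∀ r s : ℤ, s = j ∨ s = j + 1 → i + 1 ≤ r → r ≤ l - 1 →
      Exstar (r, s) = Ex (r, s)
        + (h * w / lam ^ 2)
          * (tent h (xold - i * h) + tent h (xold - (i + 1) * h)
            - tent h (xnew - (i + 1) * h))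
          * tent h (y - s * h))
    (hstar_l : ∀ s : ℤ, s = j ∨ s = j + 1 →
      Exstar (l, s) = Ex (l, s)
        + (h * w / lam ^ 2) * tent h (xnew - (l + 1) * h) * tent h (y - s * h))
    (hother : ∀ p : ℤ × ℤ,
      ¬((p.2 = j ∨ p.2 = j + 1) ∧ (i ≤ p.1 ∧ p.1 ≤ l)) → Exstar p = Ex p) :
    ∀ p : ℤ × ℤ, divh h Exstar Ey p = (n0 - nnew p) / lam ^ 2 := by
  have hA0 : ∀ k : ℤ, (k < i ∨ i + 1 < k) → tent h (xold - k * h) = 0 :=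
    fun k hk => tent_zero_aux h xold hh i k hxold₁ hxold₂ hk
  have hB0 : ∀ k : ℤ, (k < l ∨ l + 1 < k) → tent h (xnew - k * h) = 0 :=
    fun k hk => tent_zero_aux h xnew hh l k hxnew₁ hxnew₂ hk
  have hC0 : ∀ k : ℤ, (k < j ∨ j + 1 < k) → tent h (y - k * h) = 0 :=
    fun k hk => tent_zero_aux h y hh j k hy₁ hy₂ hk
  have hA1 := tent_sum_aux h xold hh i hxold₁ hxold₂
  have hB1 := tent_sum_aux h xnew hh l hxnew₁ hxnew₂
  have ci : ((i : ℝ) + 1) = ((i + 1 : ℤ) : ℝ) := by push_cast; rfl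
  have cl : ((l : ℝ) + 1) = ((l + 1 : ℤ) : ℝ) := by push_cast; rfl
  simp only [ci, cl] at hstar_mid hstar_l
  clear ci cl hxold₁ hxold₂ hxnew₁ hxnew₂ hy₁ hy₂
  generalize hA : (fun k : ℤ => tent h (xold - k * h)) = A
  generalize hB : (fun k : ℤ => tent h (xnew - k * h)) = B
  generalize hC : (fun k : ℤ => tent h (y - k * h)) = C
  have hA' : ∀ k : ℤ, tent h (xold - k * h) = A k := fun k => congrFun hA k
  have hB' : ∀ k : ℤ, tent h (xnew - k * h) = B k := fun k => congrFun hB k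
  have hC' : ∀ k : ℤ, tent h (y - k * h) = C k := fun k => congrFun hC k
  simp only [hA', hB', hC'] at *
  obtain ⟨f, hf⟩ : ∃ f : ℤ → ℝ, f = fun k => if k = i then A i else if k = l then B (l + 1)
      else if i < k ∧ k < l then 1 / h else 0 := ⟨_, rfl⟩
  have hE : ∀ k s : ℤ, Exstar (k, s) = Ex (k, s) + (h * w / lam ^ 2) * f k * C s := by
    intro k s
    by_cases hs : s = j ∨ s = j + 1
    · by_cases h1 : k = i
      · subst h1
        rw [hstar_i s hs]; simp [hf]
      by_cases h2 : k = l
      · subst h2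
        rw [hstar_l s hs]; simp [hf, h1]
      by_cases h3 : i < k ∧ k < l
      · rw [hstar_mid k s hs (by omega) (by omega), hA1, hB0 (i + 1) (by omega)]
        simp [hf, h1, h2, h3]
      · rw [hother (k, s) (by simp only; omega)]
        simp [hf, h1, h2, h3]
    · rw [hother (k, s) (by simp only; tauto), hC0 s (by omega)]
      ring
  have hd : ∀ k : ℤ, f k - f (k - 1) = A k - B k := by
    intro k
    subst hf
    beta_reduce
    rcases lt_trichotomy k i with h1 | h1 | h1
    · simp only [hA0 k (by omega), hB0 k (by omega)]
      split_ifs <;> first | omega | simp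
    · subst h1
      simp only [hB0 k (by omega)]
      split_ifs <;> first | omega | simp
    by_cases h2 : k = i + 1
    · subst h2
      by_cases h3 : l = i + 1
      · subst h3
        split_ifs <;> first | omega | linarith
      · rw [hB0 (i + 1) (by omega)]
        split_ifs <;> first | omega | linarith
    rw [hA0 k (by omega)]
    by_cases h3 : k = l
    · subst h3
      split_ifs <;> first | omega | linarith
    by_cases h4 : k = l + 1
    · subst h4
      simp only [add_sub_cancel_right]
      split_ifs <;> first | omega | linarith
    rw [hB0 k (by omega)]
    split_ifs <;> first | omega | linarith
  rintro ⟨k, s⟩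
  have hG := hGauss (k, s)
  have hdk := hd k
  simp only [divh, hnold, hnnew, hE] at hG ⊢
  have e : (Ex (k, s) + h * w / lam ^ 2 * f k * C s
      - (Ex (k - 1, s) + h * w / lam ^ 2 * f (k - 1) * C s)) / h
      = (Ex (k, s) - Ex (k - 1, s)) / h + w / lam ^ 2 * (f k - f (k - 1)) * C s := by
    field_simp
    ring
  rw [e, hdk]
  have e2 : (n0 - (nbg (k, s) + w * B k * C s)) / lam ^ 2
      = (n0 - (nbg (k, s) + w * A k * C s)) / lam ^ 2 + w / lam ^ 2 * (A k - B k) * C s := by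
    ring
  rw [e2, ← hG]
  ring
end

section
/- Let h, λ > 0 and w ∈ ℝ, and let S(y) = max(0, 1 − |y|/h)/h be the tent shape function of spacing h. Fix integers i, j and real numbers x_old, x_new, y satisfying i·h ≤ x_old < (i+1)·h, i·h ≤ x_new < (i+1)·h, and j·h ≤ y < (j+1)·h. Let n_bg : ℤ × ℤ → ℝ and n0 ∈ ℝ, and define the densities n_old(k,r) = n_bg(k,r) + w·S(x_old − k·h)·S(y − r·h) and n_new(k,r) = n_bg(k,r) + w·S(x_new − k·h)·S(y − r·h). Suppose (Ex, Ey) satisfies the discrete Gauss's law with density n_old, background n0, and parameter λ. Define Ex* by Ex*(i,s) = Ex(i,s) − (h·w/λ²)·[S(x_new − i·h) − S(x_old − i·h)]·S(y − s·h) for s ∈ {j, j+1}, and Ex*(k,r) = Ex(k,r) for all other pairs (k,r). Then (Ex*, Ey) satisfies the discrete Gauss's law with density n_new, background n0, and parameter λ at every node of ℤ × ℤ. -/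
theorem tent_far (h : ℝ) (hh : 0 < h) (i : ℤ) (x : ℝ)
    (h1 : (i : ℝ) * h ≤ x) (h2 : x < ((i : ℝ) + 1) * h) (k : ℤ)
    (hk : k ≠ i) (hk' : k ≠ i + 1) : tent h (x - k * h) = 0 := by
  have key : h ≤ |x - k * h| := by
    rcases lt_or_gt_of_ne hk with hlt | hgt
    · have : (k : ℝ) + 1 ≤ i := by exact_mod_cast hlt
      refine le_trans ?_ (le_abs_self _)
      nlinarith
    · have h3 : i + 2 ≤ k := by omega
      have : (i : ℝ) + 2 ≤ k := by exact_mod_cast h3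
      refine le_trans ?_ (neg_le_abs _)
      nlinarith
  have : 1 ≤ |x - k * h| / h := by rwa [le_div_iff₀ hh, one_mul]
  unfold tent
  rw [max_eq_left (by linarith), zero_div]

theorem tent_add (h : ℝ) (hh : 0 < h) (i : ℤ) (x : ℝ)
    (h1 : (i : ℝ) * h ≤ x) (h2 : x < ((i : ℝ) + 1) * h) :
    tent h (x - (i + 1) * h) = 1 / h - tent h (x - i * h) := by
  have a1 : (x - i * h) / h ≤ 1 := by rw [div_le_one hh]; linarith
  have a2 : -(x - (i + 1) * h) / h ≤ 1 := by rw [div_le_one hh]; linarith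
  unfold tent
  rw [abs_of_nonneg (by linarith : 0 ≤ x - i * h),
    abs_of_nonpos (by linarith : x - (i + 1) * h ≤ 0),
    max_eq_right (by linarith), max_eq_right (by linarith)]
  field_simp
  ring

/-- Within-cell case of Theorem 3.1: the local electric-field update
accompanying a particle move in the `x`-direction that stays inside one grid
cell exactly preserves the discrete Gauss's law at every node. -/
theorem gauss_preserved_within_cell
    (h lam w : ℝ) (hh : 0 < h) (hlam : 0 < lam)
    (i j : ℤ) (xold xnew y : ℝ)
    (hxold₁ : (i : ℝ) * h ≤ xold) (hxold₂ : xold < ((i : ℝ) + 1) * h)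
    (hxnew₁ : (i : ℝ) * h ≤ xnew) (hxnew₂ : xnew < ((i : ℝ) + 1) * h)
    (hy₁ : (j : ℝ) * h ≤ y) (hy₂ : y < ((j : ℝ) + 1) * h)
    (nbg : ℤ × ℤ → ℝ) (n0 : ℝ)
    (nold nnew : ℤ × ℤ → ℝ)
    (hnold : ∀ q : ℤ × ℤ,
      nold q = nbg q + w * tent h (xold - q.1 * h) * tent h (y - q.2 * h))
    (hnnew : ∀ q : ℤ × ℤ,
      nnew q = nbg q + w * tent h (xnew - q.1 * h) * tent h (y - q.2 * h))
    (Ex Ey : ℤ × ℤ → ℝ)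
    (hGauss : ∀ p : ℤ × ℤ, divh h Ex Ey p = (n0 - nold p) / lam ^ 2)
    (Exstar : ℤ × ℤ → ℝ)
    (hstar : ∀ s : ℤ, s = j ∨ s = j + 1 →
      Exstar (i, s) = Ex (i, s)
        - (h * w / lam ^ 2) * (tent h (xnew - i * h) - tent h (xold - i * h))
          * tent h (y - s * h))
    (hother : ∀ p : ℤ × ℤ, ¬(p.1 = i ∧ (p.2 = j ∨ p.2 = j + 1)) →
      Exstar p = Ex p) :
    ∀ p : ℤ × ℤ, divh h Exstar Ey p = (n0 - nnew p) / lam ^ 2 := by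
  have hi : ∀ s : ℤ, Exstar (i, s) = Ex (i, s)
        - (h * w / lam ^ 2) * (tent h (xnew - i * h) - tent h (xold - i * h))
          * tent h (y - s * h) := by
    intro s
    by_cases hs : s = j ∨ s = j + 1
    · exact hstar s hs
    · rw [hother (i, s) (fun hc => hs hc.2)]
      rw [not_or] at hs
      rw [tent_far h hh j y hy₁ hy₂ s hs.1 hs.2]
      ring
  have ho : ∀ k s : ℤ, k ≠ i → Exstar (k, s) = Ex (k, s) :=
    fun k s hk => hother (k, s) (fun hc => hk hc.1)
  rintro ⟨k, r⟩
  have hG := hGauss (k, r)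
  rw [hnold] at hG
  rw [hnnew]
  simp only [divh] at hG ⊢
  have hh' := hh.ne'
  have hl' := hlam.ne'
  by_cases hk : k = i
  · subst hk
    rw [hi, ho (k - 1) r (by omega)]
    have e : ∀ a b c d : ℝ, (a - h * w / lam ^ 2 * b * c - d) / h
        = (a - d) / h - w * b * c / lam ^ 2 := by
      intro a b c d
      field_simp
      ring
    rw [e]
    linear_combination hG
  · by_cases hk' : k = i + 1
    · subst hk'
      rw [add_sub_cancel_right] at hG ⊢
      rw [hi, ho (i + 1) r hk]
      push_cast at hG ⊢
      rw [tent_add h hh i xold hxold₁ hxold₂] at hG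
      rw [tent_add h hh i xnew hxnew₁ hxnew₂]
      have e : ∀ a b c d : ℝ, (d - (a - h * w / lam ^ 2 * b * c)) / h
          = (d - a) / h + w * b * c / lam ^ 2 := by
        intro a b c d
        field_simp
        ring
      rw [e]
      linear_combination hG
    · rw [ho k r hk, ho (k - 1) r (by omega)]
      rw [tent_far h hh i xold hxold₁ hxold₂ k hk hk'] at hG
      rw [tent_far h hh i xnew hxnew₁ hxnew₂ k hk hk']
      exact hG
end

section
/- Let N be a positive integer, h > 0, ε > 0, Δt > 0. Let Eⁿ = (Exⁿ, Eyⁿ), Eⁿ⁺¹ = (Exⁿ⁺¹, Eyⁿ⁺¹), J = (Jx, Jy), and Q = (Qx, Qy) be discrete vector fields on the periodic N × N grid (functions (ZMod N) × (ZMod N) → ℝ for each component), and let ρⁿ, ρⁿ⁺¹ : (ZMod N) × (ZMod N) → ℝ. Assume: (i) the discrete Ampère relation ε·(Eⁿ⁺¹ − Eⁿ)/Δt + J = Q holds componentwise at every edge; (ii) (div_h Q)(i,j) = 0 for all (i,j); and (iii) the Gauss's law at step n: (div_h Eⁿ)(i,j) = ρⁿ(i,j)/ε for all (i,j). Then the following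 are equivalent: (a) the discrete charge continuity equation (ρⁿ⁺¹(i,j) − ρⁿ(i,j))/Δt + (div_h J)(i,j) = 0 holds for all (i,j); (b) the Gauss's law at step n+1: (div_h Eⁿ⁺¹)(i,j) = ρⁿ⁺¹(i,j)/ε holds for all (i,j). -/
/-- Discrete divergence of a staggered vector field `(Fx, Fy)` on the periodic
`N × N` grid of spacing `h`, at node `(k, r)`. -/
noncomputable def divhP (N : ℕ) (h : ℝ) (Fx Fy : ZMod N × ZMod N → ℝ)
    (p : ZMod N × ZMod N) : ℝ :=
  (Fx p - Fx (p.1 - 1, p.2)) / h + (Fy p - Fy (p.1, p.2 - 1)) / h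

/-- Given the time-discretized Ampère relation with a divergence-free source `Q`
and the Gauss's law at step `n`, the discrete charge continuity equation is
equivalent to the Gauss's law at step `n+1`. -/
theorem ampere_continuity_iff_gauss
    (N : ℕ) (hN : 0 < N) (h : ℝ) (hh : 0 < h) (eps : ℝ) (heps : 0 < eps)
    (dt : ℝ) (hdt : 0 < dt)
    (Exn Eyn Exn1 Eyn1 Jx Jy Qx Qy : ZMod N × ZMod N → ℝ)
    (ρn ρn1 : ZMod N × ZMod N → ℝ)
    (hAmpx : ∀ p : ZMod N × ZMod N, eps * (Exn1 p - Exn p) / dt + Jx p = Qx p)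
    (hAmpy : ∀ p : ZMod N × ZMod N, eps * (Eyn1 p - Eyn p) / dt + Jy p = Qy p)
    (hQ : ∀ p : ZMod N × ZMod N, divhP N h Qx Qy p = 0)
    (hGaussN : ∀ p : ZMod N × ZMod N, divhP N h Exn Eyn p = ρn p / eps) :
    (∀ p : ZMod N × ZMod N, (ρn1 p - ρn p) / dt + divhP N h Jx Jy p = 0) ↔
    (∀ p : ZMod N × ZMod N, divhP N h Exn1 Eyn1 p = ρn1 p / eps) := by
  have key : ∀ p, eps / dt * (divhP N h Exn1 Eyn1 p - ρn p / eps) + divhP N h Jx Jy p = 0 := by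
    intro p
    rw [← hGaussN p, ← hQ p]
    simp only [divhP, ← hAmpx, ← hAmpy]
    ring
  have hne := heps.ne'
  have hdne := hdt.ne'
  refine forall_congr' fun p => ?_
  have k := key p
  have e : (ρn1 p - ρn p) / dt = eps / dt * (ρn1 p / eps - ρn p / eps) := by
    field_simp
  rw [e]
  constructor
  · intro H
    have h2 : eps / dt * (divhP N h Exn1 Eyn1 p - ρn p / eps)
        = eps / dt * (ρn1 p / eps - ρn p / eps) := by linarith
    have h3 := mul_left_cancel₀ (div_ne_zero hne hdne) h2
    linarith
  · intro H
    rw [← H]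
    exact k
end
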